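/- Let r_1 ≥ ... ≥ r_m and c_1 ≥ ... ≥ c_n be consistent monotone line sums (not necessarily c_1 = m, r_1 = n) with n ≥ 2, and α the corresponding half-L¹-distance between row sums and the conjugate of column sums. Then there exists a set F₂ with these line sums satisfying L_h(F₂) ≤ min(2r_1 + 2α, 2r_1 + 2n − 2) and L_v(F₂) ≤ 2c_1 + 2α. -/

import Mathlib

open Finset

/-- Number of points of `F` in row `i`. -/
def rowSum (F : Finset (ℤ × ℤ)) (i : ℤ) : ℕ := (F.filter fun p => p.1 = i).card

/-- Number of points of `F` in column `j`. -/
def colSum (F : Finset (ℤ × ℤ)) (j : ℤ) : ℕ := (F.filter fun p => p.2 = j).card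

/-- Length of the horizontal boundary of `F`: the number of vertically adjacent pairs
of lattice points with exactly one of the two points in `F`. -/
def Lh (F : Finset (ℤ × ℤ)) : ℕ :=
  ((F ∪ F.image fun p => (p.1 - 1, p.2)).filter
    fun p => decide (p ∈ F) ≠ decide ((p.1 + 1, p.2) ∈ F)).card

/-- Length of the vertical boundary of `F`: the number of horizontally adjacent pairs
of lattice points with exactly one of the two points in `F`. -/
def Lv (F : Finset (ℤ × ℤ)) : ℕ :=
  ((F ∪ F.image fun p => (p.1, p.2 - 1)).filter
    fun p => decide (p ∈ F) ≠ decide ((p.1, p.2 + 1) ∈ F)).card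

/-!
A set of lattice points is cut into its columns. Its horizontal boundary is twice the number of
gaps inside the columns plus twice the first row sum; its vertical boundary is twice the number of
cells whose left neighbour is empty, where the cells of the first column contribute `c 1`. So both
kinds of defects have to be kept within `α`, and the gaps also within `n - 1`.

Without defects, the columns are bottom-justified with heights `l`, the conjugate of the row sums,
which dominates the prescribed column sums `c` and lies within `2α` of them. Split the columns where
the excess `δ` of the prefix sums of `l` over those of `c` is least, and move `δ` cells from the
first column to the last one, one contiguous block of rows to the same rows. Both sides then satisfy
the dominance condition separately, and the distance to `c` has dropped by `2δ`. Recursing into the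
two sides, the move costs at most one gap, none if `δ = 0`, and at most `δ` cells with an empty left
neighbour, while there are at most `n - 1` splits.

Monotone targets persist in the recursion if the cells are added to the target of the first column
before solving the left side and cut off afterwards, or dually subtracted from the target of the
last column and put back. One of the two is possible: the block of rows must be full to the left
of the split, or empty to its right.
-/

section Conjugate

lemma sum_update_add {ι α M : Type*} [DecidableEq ι] [AddCommMonoid M] {s : Finset ι} {k : ι}
    (hk : k ∈ s) (φ : ι → α → M) (f : ι → α) (v : α) :
    ∑ j ∈ s, φ j (Function.update f k v j) + φ k (f k) = ∑ j ∈ s, φ j (f j) + φ k v := by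
  have h_off : ∑ j ∈ s.erase k, φ j (Function.update f k v j) = ∑ j ∈ s.erase k, φ j (f j) :=
    sum_congr rfl fun j hj => by rw [Function.update_of_ne (ne_of_mem_erase hj)]
  rw [← sum_erase_add s _ hk, ← sum_erase_add s _ hk, h_off, Function.update_self, add_right_comm]

lemma sum_range_update_zero_add {k : ℕ} (hk : 0 < k) (f : ℕ → ℕ) (v : ℕ) :
    ∑ j ∈ range k, Function.update f 0 v j + f 0 = ∑ j ∈ range k, f j + v :=
  sum_update_add (mem_range.2 hk) (fun _ x => x) f v

lemma sum_range_succ_update_last_add (f : ℕ → ℕ) (s v : ℕ) :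
    ∑ j ∈ range (s + 1), Function.update f s v j + f s = ∑ j ∈ range (s + 1), f j + v :=
  sum_update_add (self_mem_range_succ s) (fun _ x => x) f v

/-- The conjugate of the sequence `f 0, …, f (n - 1)`: the `i`-th term counts the `f j` exceeding
`i`. The terms need not be sorted. -/
def conjugate (n : ℕ) (f : ℕ → ℕ) (i : ℕ) : ℕ := #{j ∈ range n | i < f j}

/-- The `ℓ¹`-distance between the first `n` terms of two sequences. -/
def l1Dist (n : ℕ) (f g : ℕ → ℕ) : ℕ := ∑ j ∈ range n, Nat.dist (f j) (g j)

variable {n N i j k : ℕ} {f g l c : ℕ → ℕ}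

lemma l1Dist_congr {f' g' : ℕ → ℕ} (hf : ∀ j < n, f j = f' j) (hg : ∀ j < n, g j = g' j) :
    l1Dist n f g = l1Dist n f' g' :=
  sum_congr rfl fun j hj => by rw [hf j (mem_range.1 hj), hg j (mem_range.1 hj)]

lemma conjugate_le (n : ℕ) (f : ℕ → ℕ) (i : ℕ) : conjugate n f i ≤ n :=
  (card_filter_le _ _).trans_eq (card_range n)

lemma antitone_conjugate (n : ℕ) (f : ℕ → ℕ) : Antitone (conjugate n f) :=
  fun _ _ h => card_le_card (monotone_filter_right _ fun _ _ hj => h.trans_lt hj)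

lemma conjugate_mono_left (h : n ≤ N) (f : ℕ → ℕ) (i : ℕ) : conjugate n f i ≤ conjugate N f i :=
  card_le_card (filter_subset_filter _ (range_subset_range.2 h))

lemma conjugate_eq_zero (h : ∀ j < n, f j ≤ i) : conjugate n f i = 0 :=
  card_filter_eq_zero_iff.2 fun j hj => (h j (mem_range.1 hj)).not_gt

lemma conjugate_add (m n : ℕ) (f : ℕ → ℕ) (i : ℕ) :
    conjugate (m + n) f i = conjugate m f i + conjugate n (fun j => f (m + j)) i := by
  simp only [conjugate, card_filter, sum_range_add]

lemma conjugate_update_add (hk : k < n) (f : ℕ → ℕ) (v i : ℕ) :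
    conjugate n (Function.update f k v) i + (if i < f k then 1 else 0)
      = conjugate n f i + (if i < v then 1 else 0) := by
  simpa only [conjugate, card_filter] using
    sum_update_add (mem_range.2 hk) (fun _ x => if i < x then 1 else 0) f v

lemma lt_conjugate_iff (hf : AntitoneOn f (Set.Iio N)) (hi : i < N) :
    i < conjugate N f j ↔ j < f i := by
  constructor <;> intro h
  · by_contra! hji
    have h_sub : {k ∈ range N | j < f k} ⊆ range i := fun k hk => by
      rw [mem_filter, mem_range] at hk
      by_contra! hik
      have := hf hi hk.1 (not_lt.1 fun h_lt => hik (mem_range.2 h_lt))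
      omega
    have := card_le_card h_sub
    rw [card_range] at this
    exact absurd h this.not_gt
  · have h_sub : range (i + 1) ⊆ {k ∈ range N | j < f k} := fun k hk => by
      have hki := Nat.lt_succ_iff.1 (mem_range.1 hk)
      exact mem_filter.2 ⟨mem_range.2 (hki.trans_lt hi), h.trans_le (hf (hki.trans_lt hi) hi hki)⟩
    simpa only [card_range] using! card_le_card h_sub

lemma conjugate_conjugate_apply (hf : AntitoneOn f (Set.Iio N)) (hi : i < N) (hfi : f i ≤ n) :
    conjugate n (conjugate N f) i = f i := by
  have h_range : {j ∈ range n | i < conjugate N f j} = range (f i) := by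
    ext j
    simp only [mem_filter, mem_range, lt_conjugate_iff hf hi]
    omega
  rw [conjugate, h_range, card_range]

lemma conjugate_conjugate (hf : AntitoneOn f (Set.Iio N)) (hfn : ∀ i, f i ≤ n)
    (hfN : ∀ i, N ≤ i → f i = 0) :   conjugate n (conjugate N f) = f := by
  funext i
  rcases lt_or_ge i N with hi | hi
  · exact conjugate_conjugate_apply hf hi (hfn i)
  · rw [hfN i hi, conjugate_eq_zero fun j _ => (conjugate_le N f j).trans hi]

lemma sum_range_conjugate (n N : ℕ) (f : ℕ → ℕ) :
    ∑ j ∈ range n, conjugate N f j = ∑ i ∈ range N, min n (f i) := by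
  calc ∑ j ∈ range n, conjugate N f j
      = ∑ i ∈ range N, #{j ∈ range n | j < f i} :=
        sum_card_bipartiteAbove_eq_sum_card_bipartiteBelow fun j i => j < f i
    _ = ∑ i ∈ range N, min n (f i) := sum_congr rfl fun i _ => by
        rw [← card_range (min n (f i))]
        congr 1
        ext j
        simp only [mem_filter, mem_range, lt_min_iff]

lemma dist_card_filter_le {α : Type*} (s : Finset α) (p q : α → Prop) [DecidablePred p]
    [DecidablePred q] : Nat.dist #{a ∈ s | p a} #{a ∈ s | q a} ≤ #{a ∈ s | ¬(p a ↔ q a)} := by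
  have h_split : ∀ (p q : α → Prop) [DecidablePred p] [DecidablePred q],
      #{a ∈ s | p a} ≤ #{a ∈ s | q a} + #{a ∈ s | ¬(p a ↔ q a)} := fun p q _ _ => by
    classical
    refine (card_le_card fun a ha => ?_).trans (card_union_le _ _)
    simp only [mem_union, mem_filter] at ha ⊢
    tauto
  have h_pq := h_split p q
  have h_qp := h_split q p
  simp only [iff_comm (a := q _)] at h_qp
  unfold Nat.dist
  omega

lemma l1Dist_conjugate_le (n N : ℕ) (f g : ℕ → ℕ) :
    l1Dist n (conjugate N f) (conjugate N g) ≤ l1Dist N f g := by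
  calc l1Dist n (conjugate N f) (conjugate N g)
      ≤ ∑ j ∈ range n, #{i ∈ range N | ¬(j < f i ↔ j < g i)} :=
        sum_le_sum fun j _ => dist_card_filter_le _ _ _
    _ = ∑ i ∈ range N, #{j ∈ range n | ¬(j < f i ↔ j < g i)} :=
        sum_card_bipartiteAbove_eq_sum_card_bipartiteBelow fun j i => ¬(j < f i ↔ j < g i)
    _ ≤ l1Dist N f g := sum_le_sum fun i _ => by
        rw [Nat.dist_eq_max_sub_min, ← Nat.card_Ico]
        refine card_le_card fun j hj => ?_
        rw [mem_filter] at hj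
        rw [mem_Ico]
        omega

lemma l1Dist_add (m n : ℕ) (f g : ℕ → ℕ) :
    l1Dist (m + n) f g = l1Dist m f g + l1Dist n (fun j => f (m + j)) (fun j => g (m + j)) :=
  sum_range_add _ _ _

lemma l1Dist_update_left_add (hk : k < n) (f g : ℕ → ℕ) (v : ℕ) :
    l1Dist n (Function.update f k v) g + Nat.dist (f k) (g k)
      = l1Dist n f g + Nat.dist v (g k) :=
  sum_update_add (mem_range.2 hk) (fun j x => Nat.dist x (g j)) f v

lemma l1Dist_update_right_add (hk : k < n) (f g : ℕ → ℕ) (v : ℕ) :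
    l1Dist n f (Function.update g k v) + Nat.dist (f k) (g k)
      = l1Dist n f g + Nat.dist (f k) v :=
  sum_update_add (mem_range.2 hk) (fun j x => Nat.dist (f j) x) g v

lemma l1Dist_raise {t s δ : ℕ} (h_first : c 0 + δ ≤ l 0)
    (h_last : l (t + 1 + s) + δ ≤ c (t + 1 + s)) :
    l1Dist (t + 1) l (Function.update c 0 (c 0 + δ))
      + l1Dist (s + 1) (Function.update (fun j => l (t + 1 + j)) s (l (t + 1 + s) + δ))
        (fun j => c (t + 1 + j)) + 2 * δ = l1Dist (t + 1 + s + 1) l c := by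
  have h_left := l1Dist_update_right_add t.add_one_pos l c (c 0 + δ)
  have h_right := l1Dist_update_left_add s.lt_add_one (fun j => l (t + 1 + j))
    (fun j => c (t + 1 + j)) (l (t + 1 + s) + δ)
  simp only [Nat.dist] at h_left h_right
  rw [add_assoc (t + 1) s 1, l1Dist_add (t + 1) (s + 1) l c]
  omega

lemma l1Dist_lower {t s δ : ℕ} (h_first : c 0 + δ ≤ l 0)
    (h_last : l (t + 1 + s) + δ ≤ c (t + 1 + s)) :
    l1Dist (t + 1) (Function.update l 0 (l 0 - δ)) c
      + l1Dist (s + 1) (fun j => l (t + 1 + j))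
        (Function.update (fun j => c (t + 1 + j)) s (c (t + 1 + s) - δ)) + 2 * δ
      = l1Dist (t + 1 + s + 1) l c := by
  have h_left := l1Dist_update_left_add t.add_one_pos l c (l 0 - δ)
  have h_right := l1Dist_update_right_add s.lt_add_one (fun j => l (t + 1 + j))
    (fun j => c (t + 1 + j)) (c (t + 1 + s) - δ)
  simp only [Nat.dist] at h_left h_right
  rw [add_assoc (t + 1) s 1, l1Dist_add (t + 1) (s + 1) l c]
  omega

end Conjugate

section Dominance

/-- Dominance order on the sequences of length `n` with equal sums: every prefix sum of `c` is at
most that of `l`. -/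
structure Dominates (n : ℕ) (l c : ℕ → ℕ) : Prop where
  prefix_le : ∀ t ≤ n, ∑ j ∈ range t, c j ≤ ∑ j ∈ range t, l j
  sum_eq : ∑ j ∈ range n, l j = ∑ j ∈ range n, c j

variable {n N : ℕ} {l c : ℕ → ℕ}

-- The double conjugate sorts a sequence, which can only increase its prefix sums.
lemma Dominates.conjugate_conjugate (h : Dominates n l c) (hl : ∀ j < n, l j ≤ N) :
    Dominates n (conjugate N (conjugate n l)) c := by
  have sum_eq_conjugate : ∀ t ≤ n, ∑ j ∈ range t, l j = ∑ i ∈ range N, conjugate t l i :=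
    fun t ht => by
      rw [sum_range_conjugate]
      exact sum_congr rfl fun j hj =>
        (min_eq_right (hl j ((mem_range.1 hj).trans_le ht))).symm
  refine ⟨fun t ht => (h.prefix_le t ht).trans ?_, Eq.trans ?_ h.sum_eq⟩
  · rw [sum_eq_conjugate t ht, sum_range_conjugate t N]
    exact sum_le_sum fun i _ => le_min (conjugate_le t l i) (conjugate_mono_left ht l i)
  · rw [sum_eq_conjugate n le_rfl, sum_range_conjugate n N]
    exact sum_congr rfl fun i _ => min_eq_right (conjugate_le n l i)

lemma l1Dist_conjugate_conjugate_le (hc : AntitoneOn c (Set.Iio n)) (hcN : ∀ j < n, c j ≤ N) :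
    l1Dist n (conjugate N (conjugate n l)) c ≤ l1Dist n l c := by
  calc l1Dist n (conjugate N (conjugate n l)) c
      = l1Dist n (conjugate N (conjugate n l)) (conjugate N (conjugate n c)) :=
        l1Dist_congr (fun _ _ => rfl) fun j hj =>
          (conjugate_conjugate_apply hc hj (hcN j hj)).symm
    _ ≤ l1Dist N (conjugate n l) (conjugate n c) := l1Dist_conjugate_le _ _ _ _
    _ ≤ l1Dist n l c := l1Dist_conjugate_le _ _ _ _

/-- A split of the indices `0, …, t + 1 + s` after position `t`, where the prefix sums of `l` exceed
those of `c` by `δ`, the least excess over all proper nonempty prefixes. -/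
structure IsMinSplit (t s δ : ℕ) (l c : ℕ → ℕ) : Prop where
  prefix_le : ∀ k, 0 < k → k ≤ t + 1 + s →
    ∑ j ∈ range k, c j + δ ≤ ∑ j ∈ range k, l j
  split_eq : ∑ j ∈ range (t + 1), l j = ∑ j ∈ range (t + 1), c j + δ
  sum_eq : ∑ j ∈ range (t + 1 + s + 1), l j = ∑ j ∈ range (t + 1 + s + 1), c j

lemma Dominates.exists_isMinSplit {m : ℕ} (hm : m ≠ 0) (h : Dominates (m + 1) l c) :
    ∃ t s δ, m = t + 1 + s ∧ IsMinSplit t s δ l c := by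
  obtain ⟨k, hk, hk_min⟩ := exists_min_image (Icc 1 m)
    (fun k => ∑ j ∈ range k, l j - ∑ j ∈ range k, c j) ⟨1, by rw [mem_Icc]; omega⟩
  rw [mem_Icc] at hk
  obtain ⟨t, rfl⟩ := Nat.exists_eq_add_of_le' hk.1
  obtain ⟨s, rfl⟩ := Nat.exists_eq_add_of_le hk.2
  have h_split := h.prefix_le (t + 1) (by omega)
  refine ⟨t, s, _, rfl, fun k hk0 hks => ?_, (Nat.add_sub_of_le h_split).symm, h.sum_eq⟩
  have h_min := hk_min k (mem_Icc.2 ⟨hk0, hks⟩)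
  have h_le := h.prefix_le k (by omega)
  omega

namespace IsMinSplit

variable {t s δ k : ℕ}

lemma first_le (h : IsMinSplit t s δ l c) : c 0 + δ ≤ l 0 := by
  simpa only [sum_range_one] using h.prefix_le 1 one_pos (by omega)

lemma last_le (h : IsMinSplit t s δ l c) : l (t + 1 + s) + δ ≤ c (t + 1 + s) := by
  have h_init := h.prefix_le (t + 1 + s) (by omega) le_rfl
  have h_sum := h.sum_eq
  rw [sum_range_succ, sum_range_succ _ (t + 1 + s)] at h_sum
  omega

lemma right_prefix_le (h : IsMinSplit t s δ l c) (hk : k ≤ s) :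
    ∑ j ∈ range k, c (t + 1 + j) ≤ ∑ j ∈ range k, l (t + 1 + j) := by
  have h_le := h.prefix_le (t + 1 + k) (by omega) (by omega)
  have h_split := h.split_eq
  rw [sum_range_add _ (t + 1), sum_range_add _ (t + 1)] at h_le
  omega

lemma right_sum_eq (h : IsMinSplit t s δ l c) :
    ∑ j ∈ range (s + 1), c (t + 1 + j) = ∑ j ∈ range (s + 1), l (t + 1 + j) + δ := by
  have h_sum := h.sum_eq
  have h_split := h.split_eq
  rw [add_assoc (t + 1), sum_range_add, sum_range_add _ (t + 1)] at h_sum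
  omega

lemma dominates_left_raise (h : IsMinSplit t s δ l c) :
    Dominates (t + 1) l (Function.update c 0 (c 0 + δ)) := by
  refine ⟨fun k hk => ?_, ?_⟩
  · rcases k.eq_zero_or_pos with rfl | hk0
    · simp
    · have h_le := h.prefix_le k hk0 (by omega)
      have h_upd := sum_range_update_zero_add hk0 c (c 0 + δ)
      omega
  · have h_split := h.split_eq
    have h_upd := sum_range_update_zero_add t.add_one_pos c (c 0 + δ)
    omega

lemma dominates_left_lower (h : IsMinSplit t s δ l c) :
    Dominates (t + 1) (Function.update l 0 (l 0 - δ)) c := by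
  have h_first := h.first_le
  refine ⟨fun k hk => ?_, ?_⟩
  · rcases k.eq_zero_or_pos with rfl | hk0
    · simp
    · have h_le := h.prefix_le k hk0 (by omega)
      have h_upd := sum_range_update_zero_add hk0 l (l 0 - δ)
      omega
  · have h_split := h.split_eq
    have h_upd := sum_range_update_zero_add t.add_one_pos l (l 0 - δ)
    omega

lemma dominates_right_raise (h : IsMinSplit t s δ l c) :
    Dominates (s + 1) (Function.update (fun j => l (t + 1 + j)) s (l (t + 1 + s) + δ))
      (fun j => c (t + 1 + j)) := by
  have h_upd := sum_range_succ_update_last_add (fun j => l (t + 1 + j)) s (l (t + 1 + s) + δ)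
  have h_sum := h.right_sum_eq
  refine ⟨fun k hk => ?_, by omega⟩
  rcases hk.lt_or_eq with hks | rfl
  · rw [sum_update_of_notMem (by rw [mem_range]; omega)]
    exact h.right_prefix_le (Nat.lt_succ_iff.1 hks)
  · omega

lemma dominates_right_lower (h : IsMinSplit t s δ l c) :
    Dominates (s + 1) (fun j => l (t + 1 + j))
      (Function.update (fun j => c (t + 1 + j)) s (c (t + 1 + s) - δ)) := by
  have h_last := h.last_le
  have h_upd := sum_range_succ_update_last_add (fun j => c (t + 1 + j)) s (c (t + 1 + s) - δ)
  have h_sum := h.right_sum_eq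
  refine ⟨fun k hk => ?_, by omega⟩
  rcases hk.lt_or_eq with hks | rfl
  · rw [sum_update_of_notMem (by rw [mem_range]; omega)]
    exact h.right_prefix_le (Nat.lt_succ_iff.1 hks)
  · omega

end IsMinSplit

lemma antitoneOn_update_zero {v : ℕ} (hc : AntitoneOn c (Set.Iio n)) (hv : c 0 ≤ v) :
    AntitoneOn (Function.update c 0 v) (Set.Iio n) := by
  intro i hi j hj hij
  have h_le := hc hi hj hij
  simp only [Function.update_apply]
  split_ifs with hj0 hi0 hi0
  · exact le_rfl
  · omega
  · exact (hi0 ▸ h_le).trans hv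
  · exact h_le

lemma antitoneOn_update_last {s v : ℕ} (hc : AntitoneOn c (Set.Iio (s + 1))) (hv : v ≤ c s) :
    AntitoneOn (Function.update c s v) (Set.Iio (s + 1)) := by
  intro i hi j hj hij
  have h_le := hc hi hj hij
  rw [Set.mem_Iio] at hj
  simp only [Function.update_apply]
  split_ifs with hjs his his
  · exact le_rfl
  · exact hv.trans (hjs ▸ h_le)
  · omega
  · exact h_le

lemma antitoneOn_shift {m : ℕ} (hc : AntitoneOn c (Set.Iio (m + n))) :
    AntitoneOn (fun j => c (m + j)) (Set.Iio n) := fun _ hi _ hj hij =>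
  hc (Nat.add_lt_add_left hi m) (Nat.add_lt_add_left hj m) (Nat.add_le_add_left hij m)

end Dominance

section Columns

/-- The number of gaps in a column occupying the rows `S`, a gap being counted at the cell just
above it. The space below the lowest cell counts as a gap unless row `0` is occupied. -/
def gapCount (S : Finset ℕ) : ℕ := #{i ∈ S | i ≠ 0 ∧ i - 1 ∉ S}

/-- The number of columns among `G 0, …, G (n - 1)` that occupy row `i`. -/
def rowCount (n : ℕ) (G : ℕ → Finset ℕ) (i : ℕ) : ℕ := #{j ∈ range n | i ∈ G j}

/-- The total number of gaps in the columns `G 0, …, G (n - 1)`. -/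
def gaps (n : ℕ) (G : ℕ → Finset ℕ) : ℕ := ∑ j ∈ range n, gapCount (G j)

/-- The number of cells in the columns `G 1, …, G n` whose left neighbour is empty. -/
def jumps (n : ℕ) (G : ℕ → Finset ℕ) : ℕ := ∑ j ∈ range n, #(G (j + 1) \ G j)

/-- The columns of `A` to the left of position `t`, followed by those of `B`. -/
def juxtapose (t : ℕ) (A B : ℕ → Finset ℕ) (j : ℕ) : Finset ℕ := if j < t then A j else B (j - t)

variable {n t s k i δ : ℕ} {G A B : ℕ → Finset ℕ} {S : Finset ℕ} {l c : ℕ → ℕ}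

lemma gapCount_sdiff_Ico_le (S : Finset ℕ) (a δ : ℕ) :
    gapCount (S \ Ico a (a + δ)) ≤ gapCount S + min 1 δ := by
  rcases δ.eq_zero_or_pos with rfl | hδ
  · simp
  rw [min_eq_left hδ]
  refine (card_le_card fun i hi => ?_).trans (card_insert_le (a + δ) _)
  simp only [mem_filter, mem_sdiff, mem_Ico, mem_insert] at hi ⊢
  by_cases h : i - 1 ∈ S
  · left
    have : a ≤ i - 1 ∧ i - 1 < a + δ := by tauto
    omega
  · tauto

lemma gapCount_union_Ico_le (S : Finset ℕ) (a δ : ℕ) :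
    gapCount (S ∪ Ico a (a + δ)) ≤ gapCount S + min 1 δ := by
  rcases δ.eq_zero_or_pos with rfl | hδ
  · simp
  rw [min_eq_left hδ]
  refine (card_le_card fun i hi => ?_).trans (card_insert_le a _)
  simp only [mem_filter, mem_union, mem_Ico, mem_insert, not_or] at hi ⊢
  by_cases h : i ∈ S
  · tauto
  · have := hi.1.resolve_left h
    omega

lemma gapCount_range (a : ℕ) : gapCount (range a) = 0 := by
  refine card_filter_eq_zero_iff.2 fun i hi ⟨_, h_pred⟩ => h_pred ?_
  rw [mem_range] at hi ⊢
  omega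

lemma rowCount_le (n : ℕ) (G : ℕ → Finset ℕ) (i : ℕ) : rowCount n G i ≤ n :=
  (card_filter_le _ _).trans_eq (card_range n)

lemma mem_of_rowCount_eq (h : rowCount n G i = n) (hk : k < n) : i ∈ G k :=
  card_filter_eq_iff.1 (h.trans (card_range n).symm) k (mem_range.2 hk)

lemma rowCount_eq_zero_iff : rowCount n G i = 0 ↔ ∀ j < n, i ∉ G j := by
  simp only [rowCount, card_filter_eq_zero_iff, mem_range]

lemma rowCount_update_add (hk : k < n) (G : ℕ → Finset ℕ) (S : Finset ℕ) (i : ℕ) :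
    rowCount n (Function.update G k S) i + (if i ∈ G k then 1 else 0)
      = rowCount n G i + (if i ∈ S then 1 else 0) := by
  simpa only [rowCount, card_filter] using
    sum_update_add (mem_range.2 hk) (fun _ T => if i ∈ T then 1 else 0) G S

lemma gaps_update_add (hk : k < n) (G : ℕ → Finset ℕ) (S : Finset ℕ) :
    gaps n (Function.update G k S) + gapCount (G k) = gaps n G + gapCount S :=
  sum_update_add (mem_range.2 hk) (fun _ => gapCount) G S

lemma card_sdiff_le_add {α : Type*} [DecidableEq α] (S T S' T' : Finset α) :
    #(T' \ S') ≤ #(T \ S) + #(T' \ T) + #(S \ S') := by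
  refine (card_le_card fun i hi => ?_).trans
    ((card_union_le _ _).trans (Nat.add_le_add_right (card_union_le _ _) _))
  simp only [mem_union, mem_sdiff] at hi ⊢
  tauto

lemma jumps_update_le (n k : ℕ) (G : ℕ → Finset ℕ) (S : Finset ℕ) :
    jumps n (Function.update G k S) ≤ jumps n G + #(S \ G k) + #(G k \ S) := by
  set G' := Function.update G k S
  have h_off : ∀ j ≠ k, G' j = G j := fun j hj => Function.update_of_ne hj _ _
  have h_self : G' k = S := Function.update_self _ _ _
  have h_sum_le : ∀ (f : ℕ → ℕ) (m : ℕ), (∀ j ≠ k, f j = 0) → ∑ j ∈ range m, f j ≤ f k :=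
    fun f m hf => by
      rcases em (k ∈ range m) with hk | hk
      · exact (sum_eq_single_of_mem k hk fun j _ => hf j).le
      · rw [sum_eq_zero fun j hj => hf j fun h => hk (h ▸ hj)]
        exact zero_le
  have h_new : ∑ j ∈ range n, #(G' (j + 1) \ G (j + 1)) ≤ #(S \ G k) := by
    have := h_sum_le (fun j => #(G' j \ G j)) (n + 1) fun j hj => by simp [h_off j hj]
    rw [sum_range_succ', h_self] at this
    exact le_of_add_le_left this
  have h_old : ∑ j ∈ range n, #(G j \ G' j) ≤ #(G k \ S) := by
    simpa only [h_self] using h_sum_le (fun j => #(G j \ G' j)) n fun j hj => by simp [h_off j hj]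
  calc jumps n G'
      ≤ ∑ j ∈ range n, (#(G (j + 1) \ G j) + #(G' (j + 1) \ G (j + 1)) + #(G j \ G' j)) :=
        sum_le_sum fun j _ => card_sdiff_le_add _ _ _ _
    _ ≤ jumps n G + #(S \ G k) + #(G k \ S) := by
        rw [sum_add_distrib, sum_add_distrib]
        exact add_le_add (add_le_add_right h_new _) h_old

lemma juxtapose_of_lt (h : k < t) (A B : ℕ → Finset ℕ) : juxtapose t A B k = A k := if_pos h

lemma juxtapose_add (t k : ℕ) (A B : ℕ → Finset ℕ) : juxtapose t A B (t + k) = B k := by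
  rw [juxtapose, if_neg (by omega), Nat.add_sub_cancel_left]

lemma card_update_juxtapose (hA : ∀ j ≤ t, j ≠ k → #(A j) = c j)
    (hB : ∀ j ≤ s, t + 1 + j ≠ k → #(B j) = c (t + 1 + j)) (hS : #S = c k) :
    ∀ j ≤ t + 1 + s, #(Function.update (juxtapose (t + 1) A B) k S j) = c j := by
  intro j hj
  rcases eq_or_ne j k with rfl | hjk
  · rwa [Function.update_self]
  rw [Function.update_of_ne hjk]
  rcases le_or_gt j t with hjt | hjt
  · rw [juxtapose_of_lt (Nat.lt_succ_of_le hjt), hA j hjt hjk]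
  · obtain ⟨i, rfl⟩ := Nat.exists_eq_add_of_le (Nat.succ_le_of_lt hjt)
    rw [juxtapose_add, hB i (by omega) hjk]

lemma sum_range_juxtapose {M : Type*} [AddCommMonoid M] (t s : ℕ) (A B : ℕ → Finset ℕ)
    (φ : Finset ℕ → M) :
    ∑ j ∈ range (t + s), φ (juxtapose t A B j)
      = ∑ j ∈ range t, φ (A j) + ∑ j ∈ range s, φ (B j) := by
  rw [sum_range_add]
  congr 1
  · exact sum_congr rfl fun j hj => by rw [juxtapose_of_lt (mem_range.1 hj)]
  · exact sum_congr rfl fun j _ => by rw [juxtapose_add]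

lemma gaps_juxtapose (t s : ℕ) (A B : ℕ → Finset ℕ) :
    gaps (t + s) (juxtapose t A B) = gaps t A + gaps s B :=
  sum_range_juxtapose t s A B gapCount

lemma rowCount_juxtapose (t s : ℕ) (A B : ℕ → Finset ℕ) (i : ℕ) :
    rowCount (t + s) (juxtapose t A B) i = rowCount t A i + rowCount s B i := by
  simpa only [rowCount, card_filter] using
    sum_range_juxtapose t s A B fun S => if i ∈ S then 1 else 0

lemma jumps_juxtapose (hAB : B 0 ⊆ A t) :
    jumps (t + 1 + s) (juxtapose (t + 1) A B) = jumps t A + jumps s B := by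
  have h_seam : #(juxtapose (t + 1) A B (t + 1) \ juxtapose (t + 1) A B t) = 0 := by
    rw [show juxtapose (t + 1) A B (t + 1) = B 0 from juxtapose_add (t + 1) 0 A B,
      juxtapose_of_lt t.lt_add_one, card_eq_zero, sdiff_eq_empty_iff_subset]
    exact hAB
  rw [jumps, sum_range_add, sum_range_succ, h_seam, add_zero]
  congr 1
  · refine sum_congr rfl fun j hj => ?_
    rw [mem_range] at hj
    rw [juxtapose_of_lt (by omega), juxtapose_of_lt (by omega)]
  · exact sum_congr rfl fun j _ => by rw [add_assoc (t + 1), juxtapose_add, juxtapose_add]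

/-- The columns `G 0, …, G n` have at most `min n (D / 2)` gaps and at most `D / 2` jumps. -/
structure IsThrifty (n D : ℕ) (G : ℕ → Finset ℕ) : Prop where
  gaps_le : gaps (n + 1) G ≤ n
  two_mul_gaps_le : 2 * gaps (n + 1) G ≤ D
  two_mul_jumps_le : 2 * jumps n G ≤ D

lemma IsThrifty.mono {D D' : ℕ} (h : IsThrifty n D G) (hD : D ≤ D') : IsThrifty n D' G :=
  ⟨h.gaps_le, h.two_mul_gaps_le.trans hD, h.two_mul_jumps_le.trans hD⟩

-- The seam supplies the extra unit in the bound on `gaps` that pays for changing one column.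
lemma IsThrifty.update_juxtapose {D E : ℕ} (hA : IsThrifty t D A) (hB : IsThrifty s E B)
    (hAB : B 0 ⊆ A t) (hk : k < t + 1 + s + 1)
    (h_gap : gapCount S ≤ gapCount (juxtapose (t + 1) A B k) + min 1 δ)
    (h_card : #(S \ juxtapose (t + 1) A B k) + #(juxtapose (t + 1) A B k \ S) ≤ δ) :
    IsThrifty (t + 1 + s) (D + E + 2 * δ) (Function.update (juxtapose (t + 1) A B) k S) := by
  have h_gaps := gaps_update_add hk (juxtapose (t + 1) A B) S
  rw [add_assoc (t + 1), gaps_juxtapose] at h_gaps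
  have h_jumps := jumps_update_le (t + 1 + s) k (juxtapose (t + 1) A B) S
  rw [jumps_juxtapose hAB] at h_jumps
  obtain ⟨hA_gaps, hA_gaps', hA_jumps⟩ := hA
  obtain ⟨hB_gaps, hB_gaps', hB_jumps⟩ := hB
  constructor <;> (try rw [add_assoc (t + 1)]) <;> omega

/-- There are thrifty columns with cardinalities `c 0, …, c n` and with the same row counts as the
bottom-justified columns of heights `l 0, …, l n`, the budget being the distance of `l` and `c`. -/
def HasThriftyColumns (n : ℕ) (l c : ℕ → ℕ) : Prop :=
  ∃ G : ℕ → Finset ℕ, (∀ j ≤ n, #(G j) = c j) ∧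
    (∀ i, rowCount (n + 1) G i = conjugate (n + 1) l i) ∧
    IsThrifty n (l1Dist (n + 1) l c) G

lemma mem_of_forall_lt (hG : rowCount n G i = conjugate n l i) (hi : ∀ j < n, i < l j)
    (hk : k < n) : i ∈ G k := by
  refine mem_of_rowCount_eq (hG.trans ?_) hk
  exact (card_filter_eq_iff.2 fun j hj => hi j (mem_range.1 hj)).trans (card_range n)

lemma notMem_of_forall_le (hG : rowCount n G i = conjugate n l i) (hi : ∀ j < n, l j ≤ i)
    (hk : k < n) : i ∉ G k :=
  rowCount_eq_zero_iff.1 (hG.trans (conjugate_eq_zero hi)) k hk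

lemma hasThriftyColumns_zero (h : l 0 = c 0) : HasThriftyColumns 0 l c := by
  refine ⟨fun j => range (l j), fun j hj => ?_, fun i => ?_, ?_, ?_, ?_⟩
  · rw [Nat.le_zero.1 hj, card_range, h]
  · simp only [rowCount, conjugate, mem_range]
  all_goals simp [gaps, gapCount_range, jumps]

/-- Cut off the `δ` cells of the raised target in column `0` again, at the rows that the raised
last column occupies, which are full on the left. -/
lemma HasThriftyColumns.of_raise (hl : Antitone l) (h_first : c 0 + δ ≤ l 0)
    (h_last : l (t + 1 + s) + δ ≤ c (t + 1 + s)) (h_full : l (t + 1 + s) + δ ≤ l t)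
    (h_left : HasThriftyColumns t l (Function.update c 0 (c 0 + δ)))
    (h_right : HasThriftyColumns s
      (Function.update (fun j => l (t + 1 + j)) s (l (t + 1 + s) + δ))
      (fun j => c (t + 1 + j))) :
    HasThriftyColumns (t + 1 + s) l c := by
  obtain ⟨A, hA_card, hA_row, hA⟩ := h_left
  obtain ⟨B, hB_card, hB_row, hB⟩ := h_right
  set a := l (t + 1 + s)
  have hA_full : ∀ i < l t, ∀ j ≤ t, i ∈ A j := fun i hi j hj =>
    mem_of_forall_lt (hA_row i) (fun k hk => hi.trans_le (hl (Nat.lt_succ_iff.1 hk)))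
      (Nat.lt_succ_of_le hj)
  have h_block : Ico a (a + δ) ⊆ A 0 := fun i hi =>
    hA_full i ((mem_Ico.1 hi).2.trans_le h_full) 0 t.zero_le
  have h_seam : B 0 ⊆ A t := fun i hi => by
    refine hA_full i (not_le.1 fun h_le => ?_) t le_rfl
    refine notMem_of_forall_le (hB_row i) (fun j _ => ?_) s.zero_lt_succ hi
    rw [Function.update_apply]
    split_ifs
    · exact h_full.trans h_le
    · exact (hl (by omega)).trans h_le
  have h_zero : juxtapose (t + 1) A B 0 = A 0 := juxtapose_of_lt t.zero_lt_succ A B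
  refine ⟨Function.update (juxtapose (t + 1) A B) 0 (A 0 \ Ico a (a + δ)),
    card_update_juxtapose (fun j hj hj0 => ?_) (fun j hj _ => hB_card j hj) ?_, fun i => ?_, ?_⟩
  · rw [hA_card j hj, Function.update_of_ne hj0]
  · rw [card_sdiff_of_subset h_block, hA_card 0 t.zero_le, Function.update_self, Nat.card_Ico]
    omega
  · have h_upd := rowCount_update_add (n := t + 1 + (s + 1)) (k := 0) (by omega)
      (juxtapose (t + 1) A B) (A 0 \ Ico a (a + δ)) i
    have h_raise := conjugate_update_add s.lt_add_one (fun j => l (t + 1 + j)) (a + δ) i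
    rw [rowCount_juxtapose, hA_row, hB_row, h_zero] at h_upd
    rw [add_assoc (t + 1), conjugate_add]
    have := @h_block i
    grind
  · refine (hA.update_juxtapose hB h_seam (by omega) ?_ ?_).mono (l1Dist_raise h_first h_last).le
    · rw [h_zero]
      exact gapCount_sdiff_Ico_le _ _ _
    · rw [h_zero, sdiff_eq_empty_iff_subset.2 sdiff_subset, card_empty, zero_add,
        Finset.sdiff_sdiff_eq_self h_block, Nat.card_Ico, Nat.add_sub_cancel_left]

/-- Dually, lower the height of column `0` and the target of the last column, and put the `δ` cells
back on the last column, at rows that are empty on the right. -/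
lemma HasThriftyColumns.of_lower (hl : Antitone l) (h_first : c 0 + δ ≤ l 0)
    (h_last : l (t + 1 + s) + δ ≤ c (t + 1 + s)) (h_empty : l (t + 1) + δ ≤ l 0)
    (h_left : HasThriftyColumns t (Function.update l 0 (l 0 - δ)) c)
    (h_right : HasThriftyColumns s (fun j => l (t + 1 + j))
      (Function.update (fun j => c (t + 1 + j)) s (c (t + 1 + s) - δ))) :
    HasThriftyColumns (t + 1 + s) l c := by
  obtain ⟨A, hA_card, hA_row, hA⟩ := h_left
  obtain ⟨B, hB_card, hB_row, hB⟩ := h_right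
  set a := l 0 - δ
  have hB_empty : ∀ i, l (t + 1) ≤ i → ∀ j ≤ s, i ∉ B j := fun i hi j hj =>
    notMem_of_forall_le (hB_row i) (fun k _ => (hl (by omega)).trans hi) (Nat.lt_succ_of_le hj)
  have h_block : Disjoint (B s) (Ico a (a + δ)) := disjoint_right.2 fun i hi =>
    hB_empty i ((Nat.le_sub_of_add_le h_empty).trans (mem_Ico.1 hi).1) s le_rfl
  have h_seam : B 0 ⊆ A t := fun i hi => by
    have hit : i < l (t + 1) := not_le.1 fun h_le => hB_empty i h_le 0 s.zero_le hi
    refine mem_of_forall_lt (hA_row i) (fun j hj => ?_) t.lt_add_one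
    rw [Function.update_apply]
    split_ifs
    · omega
    · exact hit.trans_le (hl hj.le)
  have h_end : juxtapose (t + 1) A B (t + 1 + s) = B s := juxtapose_add (t + 1) s A B
  refine ⟨Function.update (juxtapose (t + 1) A B) (t + 1 + s) (B s ∪ Ico a (a + δ)),
    card_update_juxtapose (fun j hj _ => hA_card j hj) (fun j hj hjs => ?_) ?_, fun i => ?_, ?_⟩
  · rw [hB_card j hj, Function.update_of_ne (by omega)]
  · rw [card_union_of_disjoint h_block, hB_card s le_rfl, Function.update_self, Nat.card_Ico]
    omega
  · have h_upd := rowCount_update_add (n := t + 1 + (s + 1)) (k := t + 1 + s) (by omega)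
      (juxtapose (t + 1) A B) (B s ∪ Ico a (a + δ)) i
    have h_lower := conjugate_update_add t.zero_lt_succ l a i
    rw [rowCount_juxtapose, hA_row, hB_row, h_end] at h_upd
    rw [add_assoc (t + 1), conjugate_add]
    have := @disjoint_left.1 h_block i
    grind
  · refine (hA.update_juxtapose hB h_seam (by omega) ?_ ?_).mono (l1Dist_lower h_first h_last).le
    · rw [h_end]
      exact gapCount_union_Ico_le _ _ _
    · rw [h_end, union_sdiff_cancel_left h_block, sdiff_eq_empty_iff_subset.2 subset_union_left,
        card_empty, add_zero, Nat.card_Ico, Nat.add_sub_cancel_left]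

lemma HasThriftyColumns.of_conjugate_conjugate {N : ℕ} (hc : AntitoneOn c (Set.Iio (n + 1)))
    (hcN : ∀ j < n + 1, c j ≤ N) (hlN : ∀ j < n + 1, l j ≤ N)
    (h : HasThriftyColumns n (conjugate N (conjugate (n + 1) l)) c) : HasThriftyColumns n l c := by
  obtain ⟨G, hG_card, hG_row, hG⟩ := h
  refine ⟨G, hG_card, fun i => ?_, hG.mono (l1Dist_conjugate_conjugate_le hc hcN)⟩
  have hl_zero : ∀ i, N ≤ i → conjugate (n + 1) l i = 0 := fun i hi =>
    conjugate_eq_zero fun j hj => (hlN j hj).trans hi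
  rw [hG_row, conjugate_conjugate ((antitone_conjugate _ l).antitoneOn _) (conjugate_le _ l)
    hl_zero]

theorem hasThriftyColumns_of_dominates (hc : AntitoneOn c (Set.Iio (n + 1)))
    (h : Dominates (n + 1) l c) : HasThriftyColumns n l c := by
  induction n using Nat.strong_induction_on generalizing l c with
  | _ n ih => ?_
  rcases eq_or_ne n 0 with rfl | hn
  · exact hasThriftyColumns_zero (by simpa only [zero_add, sum_range_one] using h.sum_eq)
  set N := ∑ j ∈ range (n + 1), l j
  have hlN : ∀ j < n + 1, l j ≤ N := fun j hj =>
    single_le_sum_of_canonicallyOrdered (mem_range.2 hj)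
  have hcN : ∀ j < n + 1, c j ≤ N := fun j hj =>
    (single_le_sum_of_canonicallyOrdered (mem_range.2 hj)).trans_eq h.sum_eq.symm
  refine .of_conjugate_conjugate hc hcN hlN ?_
  have h_sorted := h.conjugate_conjugate hlN
  have hl := antitone_conjugate N (conjugate (n + 1) l)
  generalize conjugate N (conjugate (n + 1) l) = l' at h_sorted hl ⊢
  obtain ⟨t, s, δ, rfl, h_split⟩ := h_sorted.exists_isMinSplit hn
  have h_first := h_split.first_le
  have h_last := h_split.last_le
  have hc_left : AntitoneOn c (Set.Iio (t + 1)) := hc.mono (Set.Iio_subset_Iio (by omega))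
  have hc_right : AntitoneOn (fun j => c (t + 1 + j)) (Set.Iio (s + 1)) := antitoneOn_shift hc
  rcases le_or_gt (l' (t + 1 + s) + δ) (l' t) with h_full | h_lt
  · exact .of_raise hl h_first h_last h_full
      (ih t (by omega) (antitoneOn_update_zero hc_left (by omega)) h_split.dominates_left_raise)
      (ih s (by omega) hc_right h_split.dominates_right_raise)
  · have h_next : l' (t + 1) ≤ l' t := hl t.le_succ
    have hc_ends : c (t + 1 + s) ≤ c 0 :=
      hc (Nat.succ_pos _) (Nat.lt_succ_self _) (Nat.zero_le _)
    exact .of_lower hl h_first h_last (by omega)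
      (ih t (by omega) hc_left h_split.dominates_left_lower)
      (ih s (by omega) (antitoneOn_update_last hc_right (Nat.sub_le _ _))
        h_split.dominates_right_lower)

end Columns

section ColumnSet

lemma card_filter_mem_ne_mem_symm {α : Type*} [DecidableEq α] (e : α ≃ α) (F : Finset α) :
    #{p ∈ F ∪ F.image e | decide (p ∈ F) ≠ decide (e.symm p ∈ F)} = 2 * #{p ∈ F | e p ∉ F} := by
  have h_mem : ∀ p, e.symm p ∈ F ↔ p ∈ F.image e := fun p => by
    simp only [mem_image, ← Equiv.eq_symm_apply, exists_eq_right]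
  have h_new : F.image e \ F = {p ∈ F | e p ∉ F}.image e := by
    ext p
    simp only [mem_sdiff, mem_image, mem_filter]
    grind
  have h_symmDiff : {p ∈ F ∪ F.image e | decide (p ∈ F) ≠ decide (e.symm p ∈ F)}
      = F \ F.image e ∪ F.image e \ F := by
    ext p
    simp only [mem_filter, mem_union, mem_sdiff, h_mem]
    grind
  rw [h_symmDiff, card_union_of_disjoint disjoint_sdiff_sdiff,
    card_sdiff_comm (card_image_of_injective F e.injective).symm, h_new,
    card_image_of_injective _ e.injective, two_mul]

lemma Lh_eq (F : Finset (ℤ × ℤ)) : Lh F = 2 * #{p ∈ F | (p.1 - 1, p.2) ∉ F} :=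
  card_filter_mem_ne_mem_symm ((Equiv.subRight (1 : ℤ)).prodCongr (Equiv.refl ℤ)) F

lemma Lv_eq (F : Finset (ℤ × ℤ)) : Lv F = 2 * #{p ∈ F | (p.1, p.2 - 1) ∉ F} :=
  card_filter_mem_ne_mem_symm ((Equiv.refl ℤ).prodCongr (Equiv.subRight (1 : ℤ))) F

/-- The set of lattice points with columns `G 0, …, G (n - 1)`. The column and row indices, which
start at `0` in `G`, start at `1` in the lattice. -/
def columnSet (n : ℕ) (G : ℕ → Finset ℕ) : Finset (ℤ × ℤ) :=
  ((range n).sigma G).map ⟨fun q => ((q.2 : ℤ) + 1, (q.1 : ℤ) + 1), fun p q h => by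
    rw [Prod.mk.injEq] at h
    exact Sigma.ext (by omega) (heq_of_eq (by omega))⟩

variable {n m N i j k : ℕ} {G : ℕ → Finset ℕ}

lemma mem_columnSet {p : ℤ × ℤ} :
    p ∈ columnSet n G ↔ ∃ j i : ℕ, (j < n ∧ i ∈ G j) ∧ ((i : ℤ) + 1, (j : ℤ) + 1) = p := by
  simp only [columnSet, mem_map, mem_sigma, mem_range, Sigma.exists]
  rfl

lemma mk_mem_columnSet : ((i : ℤ) + 1, (j : ℤ) + 1) ∈ columnSet n G ↔ j < n ∧ i ∈ G j := by
  simp [mem_columnSet]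

lemma card_filter_columnSet (n : ℕ) (G : ℕ → Finset ℕ) (P : ℤ × ℤ → Prop) [DecidablePred P] :
    #{p ∈ columnSet n G | P p}
      = ∑ j ∈ range n, #{i ∈ G j | P (Nat.cast i + 1, Nat.cast j + 1)} := by
  simp only [columnSet, filter_map, card_map, card_filter, sum_sigma]
  rfl

lemma rowSum_columnSet (n : ℕ) (G : ℕ → Finset ℕ) (i : ℕ) :
    rowSum (columnSet n G) (i + 1) = rowCount n G i := by
  rw [rowSum, card_filter_columnSet, rowCount, card_filter]
  refine sum_congr rfl fun j _ => ?_
  simp only [add_left_inj, Nat.cast_inj, filter_eq', apply_ite card, card_singleton, card_empty]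

lemma colSum_columnSet (hk : k < n) : colSum (columnSet n G) (k + 1) = #(G k) := by
  rw [colSum, card_filter_columnSet,
    sum_eq_single_of_mem k (mem_range.2 hk) fun j _ hj => by simp [hj]]
  simp

lemma mk_below_mem_columnSet (hj : j < n) :
    ((i : ℤ) + 1 - 1, (j : ℤ) + 1) ∈ columnSet n G ↔ i ≠ 0 ∧ i - 1 ∈ G j := by
  cases i with
  | zero =>
    simp only [mem_columnSet, Prod.mk.injEq]
    omega
  | succ i => simp [mk_mem_columnSet, hj]

lemma mk_left_mem_columnSet (hj : j + 1 < n) :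
    ((i : ℤ) + 1, ((j + 1 : ℕ) : ℤ) + 1 - 1) ∈ columnSet n G ↔ i ∈ G j := by
  rw [add_sub_cancel_right, Nat.cast_succ, mk_mem_columnSet, and_iff_right (Nat.lt_of_succ_lt hj)]

lemma card_filter_below_notMem (S : Finset ℕ) :
    #{i ∈ S | ¬(i ≠ 0 ∧ i - 1 ∈ S)} = gapCount S + if 0 ∈ S then 1 else 0 := by
  have h_bottom : #{i ∈ S | i = 0} = if 0 ∈ S then 1 else 0 := by
    rw [filter_eq', apply_ite card, card_singleton, card_empty]
  have h_disj : Disjoint {i ∈ S | i ≠ 0 ∧ i - 1 ∉ S} {i ∈ S | i = 0} :=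
    disjoint_filter.2 fun _ _ h => h.1
  rw [← h_bottom, gapCount, ← card_union_of_disjoint h_disj, ← filter_or]
  congr 1
  exact filter_congr fun i _ => by tauto

lemma Lh_columnSet (n : ℕ) (G : ℕ → Finset ℕ) :
    Lh (columnSet n G) = 2 * (gaps n G + rowCount n G 0) := by
  rw [Lh_eq, card_filter_columnSet, gaps, rowCount, card_filter, ← sum_add_distrib]
  congr 1
  refine sum_congr rfl fun j hj => ?_
  simp only [mk_below_mem_columnSet (mem_range.1 hj), card_filter_below_notMem]

lemma Lv_columnSet (n : ℕ) (G : ℕ → Finset ℕ) :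
    Lv (columnSet (n + 1) G) = 2 * (jumps n G + #(G 0)) := by
  rw [Lv_eq, card_filter_columnSet, sum_range_succ', jumps]
  congr 2
  · refine sum_congr rfl fun j hj => ?_
    simp only [mk_left_mem_columnSet (Nat.succ_lt_succ (mem_range.1 hj)), sdiff_eq_filter]
  · congr 1
    refine filter_true_of_mem fun i _ => ?_
    simp only [mem_columnSet, Prod.mk.injEq]
    omega

lemma columnSet_subset (h : ∀ j < n, G j ⊆ range m) :
    columnSet n G ⊆ Icc 1 (m : ℤ) ×ˢ Icc 1 (n : ℤ) := by
  intro p hp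
  obtain ⟨j, i, ⟨hj, hi⟩, rfl⟩ := mem_columnSet.1 hp
  have := mem_range.1 (h j hj hi)
  simp only [mem_product, mem_Icc]
  omega

lemma exists_eq_columnSet {F : Finset (ℤ × ℤ)} (hF : F ⊆ Icc 1 (m : ℤ) ×ˢ Icc 1 (n : ℤ)) :
    ∃ G : ℕ → Finset ℕ, (∀ j, G j ⊆ range m) ∧ F = columnSet n G := by
  refine ⟨fun j => {i ∈ range m | (Nat.cast i + 1, Nat.cast j + 1) ∈ F},
    fun j => filter_subset _ _, ?_⟩
  ext ⟨x, y⟩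
  simp only [mem_columnSet, mem_filter, mem_range]
  constructor
  · intro h
    have h_box := hF h
    simp only [mem_product, mem_Icc] at h_box
    refine ⟨(y - 1).toNat, (x - 1).toNat, ⟨by omega, by omega, ?_⟩, ?_⟩
    all_goals rw [Int.toNat_of_nonneg (by omega), Int.toNat_of_nonneg (by omega)]; simp [h]
  · rintro ⟨j, i, ⟨-, -, h⟩, h_eq⟩
    exact h_eq ▸ h

lemma dominates_conjugate_rowCount (hG : ∀ j < n, G j ⊆ range N) :
    Dominates n (conjugate N (rowCount n G)) (fun j => #(G j)) := by
  have h_count : ∀ t ≤ n, ∑ j ∈ range t, #(G j) = ∑ i ∈ range N, rowCount t G i := fun t ht => by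
    refine Eq.trans (sum_congr rfl fun j hj => ?_)
      (sum_card_bipartiteAbove_eq_sum_card_bipartiteBelow fun j i => i ∈ G j)
    rw [bipartiteAbove, filter_mem_eq_inter,
      inter_eq_right.2 (hG j ((mem_range.1 hj).trans_le ht))]
  refine ⟨fun t ht => ?_, ?_⟩
  · rw [h_count t ht, sum_range_conjugate]
    exact sum_le_sum fun i _ => le_min (rowCount_le t G i)
      (card_le_card (filter_subset_filter _ (range_subset_range.2 ht)))
  · rw [h_count n le_rfl, sum_range_conjugate]
    exact sum_congr rfl fun i _ => min_eq_right (rowCount_le n G i)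

theorem exists_isThrifty {G₀ : ℕ → Finset ℕ} (hN : ∀ j < n + 1, G₀ j ⊆ range N)
    (h_row : AntitoneOn (rowCount (n + 1) G₀) (Set.Iio N))
    (h_col : AntitoneOn (fun j => #(G₀ j)) (Set.Iio (n + 1))) :
    ∃ G : ℕ → Finset ℕ, (∀ j < n + 1, G j ⊆ range N) ∧ (∀ j < n + 1, #(G j) = #(G₀ j)) ∧
      rowCount (n + 1) G = rowCount (n + 1) G₀ ∧
      IsThrifty n (l1Dist N (rowCount (n + 1) G₀) (conjugate (n + 1) fun j => #(G₀ j))) G := by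
  set c := fun j => #(G₀ j)
  have h_zero : ∀ i, N ≤ i → rowCount (n + 1) G₀ i = 0 := fun i hi =>
    rowCount_eq_zero_iff.2 fun j hj hij => hi.not_gt (mem_range.1 (hN j hj hij))
  have h_conj : conjugate (n + 1) (conjugate N (rowCount (n + 1) G₀)) = rowCount (n + 1) G₀ :=
    conjugate_conjugate h_row (rowCount_le (n + 1) G₀) h_zero
  have hcN : ∀ j < n + 1, c j ≤ N := fun j hj =>
    (card_le_card (hN j hj)).trans_eq (card_range N)
  obtain ⟨G, hG_card, hG_row, hG⟩ :=
    hasThriftyColumns_of_dominates h_col (dominates_conjugate_rowCount hN)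
  rw [h_conj] at hG_row
  refine ⟨G, fun j hj i hi => ?_, fun j hj => hG_card j (Nat.lt_succ_iff.1 hj), funext hG_row,
    hG.mono ?_⟩
  · refine mem_range.2 (not_le.1 fun hNi => ?_)
    exact rowCount_eq_zero_iff.1 ((hG_row i).trans (h_zero i hNi)) j hj hi
  · calc l1Dist (n + 1) (conjugate N (rowCount (n + 1) G₀)) c
        = l1Dist (n + 1) (conjugate N (rowCount (n + 1) G₀)) (conjugate N (conjugate (n + 1) c)) :=
          l1Dist_congr (fun _ _ => rfl) fun j hj =>
            (conjugate_conjugate_apply h_col hj (hcN j hj)).symm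
      _ ≤ l1Dist N (rowCount (n + 1) G₀) (conjugate (n + 1) c) := l1Dist_conjugate_le _ _ _ _

end ColumnSet

section OneIndexed

variable {n : ℕ} {c f : ℕ → ℕ}

lemma forall_mem_Icc_one_iff {P : ℕ → Prop} : (∀ i ∈ Icc 1 n, P i) ↔ ∀ i < n, P (i + 1) := by
  refine ⟨fun h i hi => h _ (mem_Icc.2 ⟨by omega, hi⟩), fun h i hi => ?_⟩
  obtain ⟨h_pos, h_le⟩ := mem_Icc.1 hi
  obtain ⟨i, rfl⟩ := Nat.exists_eq_add_of_le' h_pos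
  exact h i h_le

lemma sum_Icc_one_eq_sum_range {M : Type*} [AddCommMonoid M] (n : ℕ) (φ : ℕ → M) :
    ∑ i ∈ Icc 1 n, φ i = ∑ i ∈ range n, φ (i + 1) := by
  rw [range_eq_Ico, sum_Ico_add', zero_add, Ico_add_one_right_eq_Icc]

lemma antitoneOn_Iio_of_succ (hc : ∀ j j', 1 ≤ j → j ≤ j' → j' ≤ n → c j' ≤ c j)
    (hf : ∀ j < n, f j = c (j + 1)) : AntitoneOn f (Set.Iio n) := fun j hj j' hj' h => by
  rw [hf j hj, hf j' hj']
  exact hc _ _ j.succ_pos (Nat.succ_le_succ h) hj'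

lemma card_filter_Icc_one_eq_conjugate (hf : ∀ j < n, f j = c (j + 1)) (i : ℕ) :
    #{j ∈ Icc 1 n | i + 1 ≤ c j} = conjugate n f i := by
  rw [conjugate, card_filter, card_filter, sum_Icc_one_eq_sum_range]
  exact sum_congr rfl fun j hj => by
    simp only [hf j (mem_range.1 hj), Nat.succ_le_iff]

lemma sum_Icc_one_natAbs_eq_l1Dist {b g : ℕ → ℕ} (hf : ∀ i < n, f i = c (i + 1))
    (hg : ∀ i < n, g i = b (i + 1)) :
    ∑ i ∈ Icc 1 n, ((c i : ℤ) - b i).natAbs = l1Dist n f g := by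
  rw [l1Dist_congr hf hg, sum_Icc_one_eq_sum_range, l1Dist]
  refine sum_congr rfl fun i _ => ?_
  unfold Nat.dist
  omega

end OneIndexed

/-- For consistent monotone line sums (not necessarily normalized) with `n ≥ 2`, there
exists a set `F₂` with these line sums such that
`Lh F₂ ≤ min (2 r₁ + 2α) (2 r₁ + 2n - 2)` and `Lv F₂ ≤ 2 c₁ + 2α`, where
`2α = ∑_{i=1}^{max(m, c 1)} |rᵢ - bᵢ|` (with `rᵢ = 0` for `i > m`). -/
theorem exists_small_boundary_general (m n : ℕ) (r c : ℕ → ℕ)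
    (hm : 1 ≤ m) (hn : 2 ≤ n)
    (hr : ∀ i i' : ℕ, 1 ≤ i → i ≤ i' → i' ≤ m → r i' ≤ r i)
    (hc : ∀ j j' : ℕ, 1 ≤ j → j ≤ j' → j' ≤ n → c j' ≤ c j)
    (hr0 : ∀ i : ℕ, m < i → r i = 0)
    (hcons : ∃ F : Finset (ℤ × ℤ),
      F ⊆ Finset.Icc 1 (m : ℤ) ×ˢ Finset.Icc 1 (n : ℤ) ∧
      (∀ i ∈ Finset.Icc 1 m, rowSum F i = r i) ∧
      (∀ j ∈ Finset.Icc 1 n, colSum F j = c j))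
    (b : ℕ → ℕ)
    (hb : ∀ i : ℕ, b i = ((Finset.Icc 1 n).filter fun j => i ≤ c j).card) :
    ∃ F2 : Finset (ℤ × ℤ),
      F2 ⊆ Finset.Icc 1 (m : ℤ) ×ˢ Finset.Icc 1 (n : ℤ) ∧
      (∀ i ∈ Finset.Icc 1 m, rowSum F2 i = r i) ∧
      (∀ j ∈ Finset.Icc 1 n, colSum F2 j = c j) ∧
      Lh F2 ≤ min
        (2 * r 1 + ∑ i ∈ Finset.Icc 1 (max m (c 1)), ((r i : ℤ) - b i).natAbs)
        (2 * r 1 + 2 * n - 2) ∧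
      Lv F2 ≤ 2 * c 1 + ∑ i ∈ Finset.Icc 1 (max m (c 1)), ((r i : ℤ) - b i).natAbs := by
  obtain ⟨F, hF, hF_row, hF_col⟩ := hcons
  obtain ⟨n, rfl⟩ := Nat.exists_eq_add_of_le' (one_le_two.trans hn)
  obtain ⟨G₀, hG₀, rfl⟩ := exists_eq_columnSet hF
  simp only [forall_mem_Icc_one_iff, Nat.cast_succ, rowSum_columnSet] at hF_row hF_col ⊢
  have h_col : ∀ j < n + 1, #(G₀ j) = c (j + 1) := fun j hj => by
    rw [← hF_col j hj, colSum_columnSet hj]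
  have h_max : max m (c 1) = m :=
    max_eq_left <| (h_col 0 n.succ_pos).symm.trans_le <|
      (card_le_card (hG₀ 0)).trans_eq (card_range m)
  obtain ⟨G, hG_sub, hG_card, hG_row, hG⟩ := exists_isThrifty (fun j _ => hG₀ j)
    (antitoneOn_Iio_of_succ hr hF_row) (antitoneOn_Iio_of_succ hc h_col)
  rw [h_max, sum_Icc_one_natAbs_eq_l1Dist hF_row fun i _ =>
    ((hb (i + 1)).trans (card_filter_Icc_one_eq_conjugate h_col i)).symm]
  have h_gaps := hG.gaps_le
  have h_gaps' := hG.two_mul_gaps_le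
  have h_jumps := hG.two_mul_jumps_le
  refine ⟨columnSet (n + 1) G, columnSet_subset hG_sub, fun i hi => ?_, fun j hj => ?_, ?_, ?_⟩
  · rw [rowSum_columnSet, hG_row, hF_row i hi]
  · rw [colSum_columnSet hj, hG_card j hj, h_col j hj]
  · rw [Lh_columnSet, hG_row, hF_row 0 hm, zero_add]
    omega
  · rw [Lv_columnSet, hG_card 0 n.succ_pos, h_col 0 n.succ_pos, zero_add]
    omega
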